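/- Let G be a finite connected simple graph, let w be an injective weight function from the edges of G to the reals, and let T be the (unique) minimum-weight spanning tree of G. Let e be an edge of T, and let w' be a weight function agreeing with w on every edge except e, with w'(e) > w(e), and with w' still injective. Let A and B be the vertex sets of the two connected components of T with e deleted. If no edge of G other than e joins A to B, or if the minimum-weight (under w') edge f ≠ e joining A to B satisfies w'(e) < w'(f), then T is the minimum-weight spanning tree of G under w'; otherwise (T ∖ {e}) ∪ {f} is the minimum-weight spanning tree of G under w'. -/

import Mathlib

open SimpleGraph

/-- The total weight of (the edges of) a graph. -/
noncomputable def totalWeight {V : Type*} (w : Sym2 V → ℝ) (H : SimpleGraph V) : ℝ :=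
  ∑ᶠ e ∈ H.edgeSet, w e

/-- `T` is a minimum-weight spanning tree of `G` with respect to the edge weights `w`. -/
def IsMinSpanningTree {V : Type*} (G : SimpleGraph V) (w : Sym2 V → ℝ)
    (T : SimpleGraph V) : Prop :=
  T ≤ G ∧ T.IsTree ∧ ∀ T' : SimpleGraph V, T' ≤ G → T'.IsTree →
    totalWeight w T ≤ totalWeight w T'

/-!
Exchange argument. The path joining `u` and `v` in an arbitrary spanning tree `T'` must use an edge
`g` crossing the cut between the two components of `T - e`, where `e = s(u, v)`. Then `T' - g + e`
is a spanning tree, so minimality of `T` under `w` says that the forest `T - e` is no heavier than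
the forest `T' - g`. Neither forest contains `e`, so the same comparison holds under `w'`, and
adding to `T - e` a `w'`-lightest edge of the cut gives a spanning tree no heavier than `T'`. The
two possible outcomes of the update are the cases where this lightest edge is `e` itself or the
replacement edge `f`.
-/

section Exchange

variable {V : Type*} {G H : SimpleGraph V} {a b c d u v x : V}

theorem deleteEdges_sup_edge_of_adj (h : G.Adj u v) :
    G.deleteEdges {s(u, v)} ⊔ edge u v = G :=
  sdiff_sup_cancel ((edge_le_iff _).2 (Or.inr h))

theorem deleteEdges_sup_edge_le (hHG : H ≤ G) (h : G.Adj c d) (s : Set (Sym2 V)) :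
    H.deleteEdges s ⊔ edge c d ≤ G :=
  sup_le ((deleteEdges_le s).trans hHG) ((edge_le_iff _).2 (Or.inr h))

theorem fromEdgeSet_edgeSet_sdiff_union_singleton (G : SimpleGraph V) (s : Set (Sym2 V)) (c d : V) :
    fromEdgeSet ((G.edgeSet \ s) ∪ {s(c, d)}) = G.deleteEdges s ⊔ edge c d := by
  rw [← edgeSet_deleteEdges, fromEdgeSet_union, fromEdgeSet_edgeSet, edge]

theorem reachable_deleteEdges_or (h : G.Reachable u x) :
    (G.deleteEdges {s(u, v)}).Reachable u x ∨ (G.deleteEdges {s(u, v)}).Reachable v x := by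
  induction (reachable_iff_reflTransGen u x).1 h with
  | refl => exact Or.inl (Reachable.refl u)
  | @tail y z hy hyz ih =>
    by_cases he : s(y, z) = s(u, v)
    · rcases Sym2.eq_iff.1 he with ⟨-, rfl⟩ | ⟨-, rfl⟩
      · exact Or.inr (Reachable.refl z)
      · exact Or.inl (Reachable.refl z)
    · have hyz' : (G.deleteEdges {s(u, v)}).Reachable y z :=
        (deleteEdges_adj.2 ⟨hyz, he⟩).reachable
      exact (ih ((reachable_iff_reflTransGen u y).2 hy)).imp (·.trans hyz') (·.trans hyz')

theorem reachable_endpoints_of_not_reachable (hG : G.Preconnected)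
    (h : ¬ (G.deleteEdges {s(u, v)}).Reachable c d) :
    ((G.deleteEdges {s(u, v)}).Reachable u c ∧ (G.deleteEdges {s(u, v)}).Reachable v d) ∨
      ((G.deleteEdges {s(u, v)}).Reachable u d ∧ (G.deleteEdges {s(u, v)}).Reachable v c) := by
  rcases reachable_deleteEdges_or (v := v) (hG u c) with hc | hc <;>
    rcases reachable_deleteEdges_or (v := v) (hG u d) with hd | hd
  · exact absurd (hc.symm.trans hd) h
  · exact Or.inl ⟨hc, hd⟩
  · exact Or.inr ⟨hd, hc⟩
  · exact absurd (hc.symm.trans hd) h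

theorem connected_deleteEdges_sup_edge (hG : G.Connected)
    (h : ¬ (G.deleteEdges {s(u, v)}).Reachable c d) :
    (G.deleteEdges {s(u, v)} ⊔ edge c d).Connected := by
  have hmono {x y : V} (hxy : (G.deleteEdges {s(u, v)}).Reachable x y) :
      (G.deleteEdges {s(u, v)} ⊔ edge c d).Reachable x y := hxy.mono le_sup_left
  have hcd : (G.deleteEdges {s(u, v)} ⊔ edge c d).Reachable c d := by
    have hne : c ≠ d := fun hcd => h (hcd ▸ Reachable.refl c)
    exact Adj.reachable (Or.inr ((adj_edge c d).2 ⟨rfl, hne⟩))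
  have huv : (G.deleteEdges {s(u, v)} ⊔ edge c d).Reachable u v := by
    rcases reachable_endpoints_of_not_reachable hG.preconnected h with ⟨huc, hvd⟩ | ⟨hud, hvc⟩
    · exact (hmono huc).trans (hcd.trans (hmono hvd).symm)
    · exact (hmono hud).trans (hcd.symm.trans (hmono hvc).symm)
  exact (connected_iff_exists_forall_reachable _).2 ⟨u, fun x =>
    (reachable_deleteEdges_or (hG u x)).elim hmono fun hvx => huv.trans (hmono hvx)⟩

theorem isTree_deleteEdges_sup_edge (hG : G.IsTree)
    (h : ¬ (G.deleteEdges {s(u, v)}).Reachable c d) :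
    (G.deleteEdges {s(u, v)} ⊔ edge c d).IsTree :=
  ⟨connected_deleteEdges_sup_edge hG.connected h,
    (hG.isAcyclic.anti (deleteEdges_le _)).sup_edge_of_not_reachable h⟩

theorem not_reachable_deleteEdges_of_mem_edges (hG : G.IsAcyclic) {p : G.Walk u v}
    (hp : p.IsPath) (hab : s(a, b) ∈ p.edges) : ¬ (G.deleteEdges {s(a, b)}).Reachable u v := by
  classical
  rw [reachable_deleteEdges_iff_exists_walk]
  rintro ⟨q, hq⟩
  have hpq : p = q.bypass := congrArg Subtype.val ((hG.subsingleton_path u v).elim ⟨p, hp⟩ q.toPath)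
  exact hq (q.edges_bypass_subset_edges (hpq ▸ hab))

theorem exists_adj_not_reachable_deleteEdges (hG : G.IsAcyclic) (huv : G.Reachable u v)
    (h : ¬ H.Reachable u v) :
    ∃ a b, G.Adj a b ∧ ¬ H.Reachable a b ∧ ¬ (G.deleteEdges {s(a, b)}).Reachable u v := by
  obtain ⟨p, hp⟩ := huv.exists_isPath
  obtain ⟨g, hgp, hug, hug'⟩ :=
    p.exists_boundary_dart {x | H.Reachable u x} (Reachable.refl u) h
  exact ⟨g.fst, g.snd, g.adj, fun hg => hug' (Reachable.trans hug hg),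
    not_reachable_deleteEdges_of_mem_edges hG hp (List.mem_map_of_mem hgp)⟩

end Exchange

section Weight

variable {V : Type*} {G H T : SimpleGraph V} {w w' : Sym2 V → ℝ} {u v x y : V}

theorem totalWeight_congr (h : ∀ f ∈ H.edgeSet, w f = w' f) :
    totalWeight w H = totalWeight w' H :=
  finsum_mem_congr rfl h

theorem totalWeight_sup_edge (w : Sym2 V → ℝ) (hH : H.edgeSet.Finite) (hne : u ≠ v)
    (h : ¬ H.Adj u v) : totalWeight w (H ⊔ edge u v) = totalWeight w H + w s(u, v) := by
  rw [totalWeight, totalWeight, edgeSet_sup, edgeSet_edge_of_ne hne, Set.union_singleton,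
    finsum_mem_insert w (mt H.mem_edgeSet.1 h) hH, add_comm]

theorem totalWeight_sup_edge_of_not_reachable (w : Sym2 V → ℝ) (hH : H.edgeSet.Finite)
    (h : ¬ H.Reachable u v) : totalWeight w (H ⊔ edge u v) = totalWeight w H + w s(u, v) :=
  totalWeight_sup_edge w hH (fun huv => h (huv ▸ Reachable.refl u)) fun huv => h huv.reachable

theorem IsMinSpanningTree.totalWeight_deleteEdges_le [Finite V] (hT : IsMinSpanningTree G w T)
    (huv : T.Adj u v) {T' : SimpleGraph V} (hT'G : T' ≤ G) (hT' : T'.IsTree) {a b : V}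
    (hab : ¬ (T'.deleteEdges {s(a, b)}).Reachable u v) :
    totalWeight w (T.deleteEdges {s(u, v)}) ≤ totalWeight w (T'.deleteEdges {s(a, b)}) := by
  have hbridge : ¬ (T.deleteEdges {s(u, v)}).Reachable u v :=
    isAcyclic_iff_forall_adj_isBridge.1 hT.2.1.isAcyclic huv
  have hle := hT.2.2 _ (deleteEdges_sup_edge_le hT'G (hT.1 huv) {s(a, b)})
    (isTree_deleteEdges_sup_edge hT' hab)
  rw [totalWeight_sup_edge_of_not_reachable w (Set.toFinite _) hab,
    ← deleteEdges_sup_edge_of_adj huv,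
    totalWeight_sup_edge_of_not_reachable w (Set.toFinite _) hbridge] at hle
  exact le_of_add_le_add_right hle

theorem IsMinSpanningTree.deleteEdges_sup_edge [Finite V] (hT : IsMinSpanningTree G w T)
    (huv : T.Adj u v) (hagree : ∀ f ∈ G.edgeSet, f ≠ s(u, v) → w' f = w f)
    (hux : (T.deleteEdges {s(u, v)}).Reachable u x)
    (hvy : (T.deleteEdges {s(u, v)}).Reachable v y) (hxy : G.Adj x y)
    (hmin : ∀ a b, (T.deleteEdges {s(u, v)}).Reachable u a →
      (T.deleteEdges {s(u, v)}).Reachable v b → G.Adj a b → w' s(x, y) ≤ w' s(a, b)) :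
    IsMinSpanningTree G w' (T.deleteEdges {s(u, v)} ⊔ edge x y) := by
  have hbridge : ¬ (T.deleteEdges {s(u, v)}).Reachable u v :=
    isAcyclic_iff_forall_adj_isBridge.1 hT.2.1.isAcyclic huv
  have hxy_cut : ¬ (T.deleteEdges {s(u, v)}).Reachable x y :=
    fun h => hbridge ((hux.trans h).trans hvy.symm)
  refine ⟨deleteEdges_sup_edge_le hT.1 hxy _, isTree_deleteEdges_sup_edge hT.2.1 hxy_cut,
    fun T' hT'G hT' => ?_⟩
  obtain ⟨a, b, hab, hab_cut, hab_sep⟩ :=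
    exists_adj_not_reachable_deleteEdges hT'.isAcyclic (hT'.preconnected u v) hbridge
  have hweight : w' s(x, y) ≤ w' s(a, b) := by
    rcases reachable_endpoints_of_not_reachable hT.2.1.preconnected hab_cut with
      ⟨hua, hvb⟩ | ⟨hub, hva⟩
    · exact hmin a b hua hvb (hT'G hab)
    · exact Sym2.eq_swap (a := a) ▸ hmin b a hub hva (hT'G hab).symm
  have hforest {F : SimpleGraph V} (hF : F ≤ G) (huvF : ¬ F.Reachable u v) :
      totalWeight w' F = totalWeight w F :=
    totalWeight_congr fun f hf =>
      hagree f (edgeSet_mono hF hf) fun hfe => huvF (F.mem_edgeSet.1 (hfe ▸ hf)).reachable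
  have hab_bridge : ¬ (T'.deleteEdges {s(a, b)}).Reachable a b :=
    isAcyclic_iff_forall_adj_isBridge.1 hT'.isAcyclic hab
  calc totalWeight w' (T.deleteEdges {s(u, v)} ⊔ edge x y)
      = totalWeight w (T.deleteEdges {s(u, v)}) + w' s(x, y) := by
        rw [totalWeight_sup_edge_of_not_reachable w' (Set.toFinite _) hxy_cut,
          hforest ((deleteEdges_le _).trans hT.1) hbridge]
    _ ≤ totalWeight w (T'.deleteEdges {s(a, b)}) + w' s(a, b) :=
        add_le_add (hT.totalWeight_deleteEdges_le huv hT'G hT' hab_sep) hweight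
    _ = totalWeight w' (T'.deleteEdges {s(a, b)} ⊔ edge a b) := by
        rw [totalWeight_sup_edge_of_not_reachable w' (Set.toFinite _) hab_bridge,
          hforest ((deleteEdges_le _).trans hT'G) hab_sep]
    _ = totalWeight w' T' := by rw [deleteEdges_sup_edge_of_adj hab]

theorem IsMinSpanningTree.of_forall_le [Finite V] (hT : IsMinSpanningTree G w T)
    (huv : T.Adj u v) (hagree : ∀ f ∈ G.edgeSet, f ≠ s(u, v) → w' f = w f)
    (hmin : ∀ a b, (T.deleteEdges {s(u, v)}).Reachable u a →
      (T.deleteEdges {s(u, v)}).Reachable v b → G.Adj a b → s(a, b) ≠ s(u, v) →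
        w' s(u, v) ≤ w' s(a, b)) :
    IsMinSpanningTree G w' T := by
  rw [← deleteEdges_sup_edge_of_adj huv]
  refine hT.deleteEdges_sup_edge huv hagree (Reachable.refl u) (Reachable.refl v) (hT.1 huv) ?_
  intro a b hua hvb hab
  by_cases he : s(a, b) = s(u, v)
  · rw [he]
  · exact hmin a b hua hvb hab he

end Weight

theorem mst_weight_increase_update_general {V : Type*} [Finite V] {G : SimpleGraph V}
    {w w' : Sym2 V → ℝ} {T : SimpleGraph V} (hT : IsMinSpanningTree G w T)
    {u v : V} (huv : T.Adj u v)
    (hagree : ∀ f ∈ G.edgeSet, f ≠ s(u, v) → w' f = w f)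
    {A B : Set V}
    (hA : A = {x | (T.deleteEdges {s(u, v)}).Reachable u x})
    (hB : B = {x | (T.deleteEdges {s(u, v)}).Reachable v x}) :
    ((∀ x ∈ A, ∀ y ∈ B, G.Adj x y → s(x, y) = s(u, v)) → IsMinSpanningTree G w' T) ∧
    (∀ x y : V, x ∈ A → y ∈ B → G.Adj x y → s(x, y) ≠ s(u, v) →
      (∀ x' y' : V, x' ∈ A → y' ∈ B → G.Adj x' y' → s(x', y') ≠ s(u, v) →
        w' s(x, y) ≤ w' s(x', y')) →
      ((w' s(u, v) < w' s(x, y) → IsMinSpanningTree G w' T) ∧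
       (¬ w' s(u, v) < w' s(x, y) →
         IsMinSpanningTree G w'
           (SimpleGraph.fromEdgeSet ((T.edgeSet \ {s(u, v)}) ∪ {s(x, y)}))))) := by
  subst hA hB
  refine ⟨fun hnone => ?_, fun x y hux hvy hxy _ hmin => ⟨fun hlt => ?_, fun hnlt => ?_⟩⟩
  · exact hT.of_forall_le huv hagree fun a b hua hvb hab hne =>
      absurd (hnone a hua b hvb hab) hne
  · exact hT.of_forall_le huv hagree fun a b hua hvb hab hne =>
      hlt.le.trans (hmin a b hua hvb hab hne)
  · rw [fromEdgeSet_edgeSet_sdiff_union_singleton]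
    refine hT.deleteEdges_sup_edge huv hagree hux hvy hxy fun a b hua hvb hab => ?_
    by_cases he : s(a, b) = s(u, v)
    · exact he ▸ not_lt.1 hnlt
    · exact hmin a b hua hvb hab he

/-- Correctness of the weight-increase update for dynamic minimum spanning trees.
Increase the weight of a tree edge `e = s(u,v)` of the minimum spanning tree `T`, and let
`A, B` be the two components of `T - e`.  If no other edge of `G` joins `A` to `B`, or the
minimum-weight such edge `f` satisfies `w'(e) < w'(f)`, then `T` remains minimum; otherwise
`(T \ {e}) ∪ {f}` is the new minimum spanning tree. -/
theorem mst_weight_increase_update {V : Type*} [Fintype V]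
    (G : SimpleGraph V) (hG : G.Connected)
    (w w' : Sym2 V → ℝ) (hw : Set.InjOn w G.edgeSet) (hw' : Set.InjOn w' G.edgeSet)
    (T : SimpleGraph V) (hT : IsMinSpanningTree G w T)
    (u v : V) (huv : T.Adj u v)
    (hagree : ∀ f ∈ G.edgeSet, f ≠ s(u, v) → w' f = w f)
    (hinc : w s(u, v) < w' s(u, v))
    (A B : Set V)
    (hA : A = {x | (T.deleteEdges {s(u, v)}).Reachable u x})
    (hB : B = {x | (T.deleteEdges {s(u, v)}).Reachable v x}) :
    ((∀ x ∈ A, ∀ y ∈ B, G.Adj x y → s(x, y) = s(u, v)) → IsMinSpanningTree G w' T) ∧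
    (∀ x y : V, x ∈ A → y ∈ B → G.Adj x y → s(x, y) ≠ s(u, v) →
      (∀ x' y' : V, x' ∈ A → y' ∈ B → G.Adj x' y' → s(x', y') ≠ s(u, v) →
        w' s(x, y) ≤ w' s(x', y')) →
      ((w' s(u, v) < w' s(x, y) → IsMinSpanningTree G w' T) ∧
       (¬ w' s(u, v) < w' s(x, y) →
         IsMinSpanningTree G w'
           (SimpleGraph.fromEdgeSet ((T.edgeSet \ {s(u, v)}) ∪ {s(x, y)}))))) := by
  exact mst_weight_increase_update_general hT huv hagree hA hB
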